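/- arXiv:2109.09239 — 2 statements merged into one kernel-verified Lean document; each statement's English description precedes it below -/
import Mathlib

section
/- Assume Condition (A1). For every K₁ > 0 and every δ ∈ [0,1) there exist constants A₁, α₁, α′₁ > 0, depending only on K₁, δ and the constants C_ξ, H_ξ, α_ξ of (A1), such that for every θ ∈ ℝⁿ and every M ≥ 0: ℙ_θ( ℓ(|Ĩ(K₁)|) ≤ δ·ℓ(|I_*(A₁,θ)|) − M ) ≤ H₀·e^{−α′₁·ℓ(|I_*(A₁,θ)|)}·e^{−α₁·M}. -/
open MeasureTheory Finset
open scoped Classical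

/-- `ell n k = k * log(q*n/k)` with `q = e^2`; equals `0` at `k = 0` by Lean's conventions. -/
noncomputable def ell (n k : ℕ) : ℝ := (k : ℝ) * Real.log (Real.exp 2 * n / k)

lemma two_mul_le_ell {n k : ℕ} (hk : k ≤ n) : 2 * (k : ℝ) ≤ ell n k := by
  rcases Nat.eq_zero_or_pos k with rfl | hk0
  · simp [ell]
  have hk' : (0 : ℝ) < k := by exact_mod_cast hk0
  have hkn : (k : ℝ) ≤ n := by exact_mod_cast hk
  have hlog : 2 ≤ Real.log (Real.exp 2 * n / k) := by
    rw [Real.le_log_iff_exp_le (by have := hk'.trans_le hkn; positivity), le_div_iff₀ hk']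
    gcongr
  rw [ell, mul_comm]
  gcongr

lemma mul_log_le_ell {n a c : ℕ} (hac : a ≤ c) (hc : c ≤ n) :
    (a : ℝ) * Real.log (Real.exp 2 * n / c) ≤ ell n a := by
  rcases Nat.eq_zero_or_pos a with rfl | ha
  · simp [ell]
  have ha' : (0 : ℝ) < a := by exact_mod_cast ha
  have hac' : (a : ℝ) ≤ c := by exact_mod_cast hac
  have hc' : (0 : ℝ) < c := ha'.trans_le hac'
  have hn' : (0 : ℝ) < n := hc'.trans_le (by exact_mod_cast hc)
  rw [ell]
  gcongr

/-- Subadditivity of `ell n` along unions. -/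
lemma ell_card_union_le {n : ℕ} (I J : Finset (Fin n)) :
    ell n (I ∪ J).card ≤ ell n I.card + ell n J.card := by
  have hc : (I ∪ J).card ≤ n := by simpa using card_le_univ (I ∪ J)
  have hI := mul_log_le_ell (card_le_card (subset_union_left (s₁ := I) (s₂ := J))) hc
  have hJ := mul_log_le_ell (card_le_card (subset_union_right (s₁ := I) (s₂ := J))) hc
  have hcard : ((I ∪ J).card : ℝ) ≤ I.card + J.card := by exact_mod_cast card_union_le I J
  rcases Nat.eq_zero_or_pos (I ∪ J).card with h0 | hpos
  · obtain ⟨rfl, rfl⟩ := union_eq_empty.1 (card_eq_zero.1 h0)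
    simp [ell]
  have hpos' : (0 : ℝ) < (I ∪ J).card := by exact_mod_cast hpos
  have hlog : 0 ≤ Real.log (Real.exp 2 * n / (I ∪ J).card) := by
    have h := two_mul_le_ell hc
    rw [ell] at h
    exact le_of_mul_le_mul_left (by rw [mul_zero]; linarith) hpos'
  calc ell n (I ∪ J).card
      ≤ (I.card + J.card) * Real.log (Real.exp 2 * n / (I ∪ J).card) := by
        rw [ell]; gcongr
    _ ≤ _ := by rw [add_mul]; linarith

lemma choose_mul_exp_neg_ell_le {n k : ℕ} (hk : k ≤ n) :
    (n.choose k : ℝ) * Real.exp (-ell n k) ≤ Real.exp (-1) ^ k := by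
  rcases Nat.eq_zero_or_pos k with rfl | hk0
  · simp [ell]
  have hk' : (0 : ℝ) < k := by exact_mod_cast hk0
  have hn' : (0 : ℝ) < n := hk'.trans_le (by exact_mod_cast hk)
  have hexp : Real.exp (-ell n k) = (k / (Real.exp 2 * n)) ^ k := by
    rw [ell, ← mul_neg, ← Real.log_inv, inv_div, Real.exp_nat_mul,
      Real.exp_log (by positivity)]
  have hchoose : (n.choose k : ℝ) ≤ (n : ℝ) ^ k / k.factorial := Nat.choose_le_pow_div k n
  have hfac : (k : ℝ) ^ k / k.factorial ≤ Real.exp k := Real.pow_div_factorial_le_exp k hk'.le k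
  calc (n.choose k : ℝ) * Real.exp (-ell n k)
      ≤ (n : ℝ) ^ k / k.factorial * (k / (Real.exp 2 * n)) ^ k := by rw [hexp]; gcongr
    _ = (k : ℝ) ^ k / k.factorial / Real.exp 2 ^ k := by
        rw [div_pow, mul_pow]; field_simp
    _ ≤ Real.exp k / Real.exp 2 ^ k := by gcongr
    _ = Real.exp (-1) ^ k := by
        rw [← Real.exp_nat_mul, ← Real.exp_nat_mul, ← Real.exp_sub]; congr 1; ring

lemma sum_exp_neg_ell_card_le (n : ℕ) :
    ∑ J : Finset (Fin n), Real.exp (-ell n J.card) ≤ (1 - Real.exp (-1))⁻¹ := by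
  have h1 : Real.exp (-1) < 1 := by rw [Real.exp_lt_one_iff]; norm_num
  calc ∑ J : Finset (Fin n), Real.exp (-ell n J.card)
      = ∑ k ∈ range (n + 1), (n.choose k : ℝ) * Real.exp (-ell n k) := by
        rw [← powerset_univ, sum_powerset_apply_card (fun k => Real.exp (-ell n k))]
        simp
    _ ≤ ∑ k ∈ range (n + 1), Real.exp (-1) ^ k :=
        sum_le_sum fun k hk => choose_mul_exp_neg_ell_le (Nat.lt_succ_iff.1 (mem_range.1 hk))
    _ ≤ ∑' k : ℕ, Real.exp (-1) ^ k :=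
        (summable_geometric_of_lt_one (Real.exp_nonneg _) h1).sum_le_tsum _
          fun k _ => pow_nonneg (Real.exp_nonneg _) k
    _ = _ := tsum_geometric_of_lt_one (Real.exp_nonneg _) h1

lemma sum_compl_sub_sum_compl_union {n : ℕ} (f : Fin n → ℝ) (I J : Finset (Fin n)) :
    ∑ i ∈ Jᶜ, f i - ∑ i ∈ (J ∪ I)ᶜ, f i = ∑ i ∈ I \ J, f i := by
  have hI : J ∪ I = J ∪ I \ J := by simp
  have h1 := sum_add_sum_compl J f
  have h2 := sum_add_sum_compl (J ∪ I) f
  have h3 : ∑ i ∈ J ∪ I, f i = ∑ i ∈ J, f i + ∑ i ∈ I \ J, f i := by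
    rw [hI, sum_union disjoint_sdiff]
  linarith

/-- If the preselector picks `J`, the noise energy on the missed active coordinates is large. -/
lemma le_sum_noise_sq {n : ℕ} {σ K A : ℝ} (hσ : 0 < σ) (hK : 0 ≤ K) {x θ : Fin n → ℝ}
    {I J : Finset (Fin n)}
    (hJ : (∑ i ∈ Jᶜ, x i ^ 2) + K * σ ^ 2 * ell n J.card
      ≤ (∑ i ∈ (J ∪ I)ᶜ, x i ^ 2) + K * σ ^ 2 * ell n (J ∪ I).card)
    (hI : (∑ i ∈ Iᶜ, θ i ^ 2) + A * σ ^ 2 * ell n I.card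
      ≤ (∑ i ∈ Jᶜ, θ i ^ 2) + A * σ ^ 2 * ell n J.card) :
    A / 2 * (ell n I.card - ell n J.card) - K * ell n I.card
      ≤ ∑ i ∈ I \ J, ((x i - θ i) / σ) ^ 2 := by
  have hσ2 : 0 < σ ^ 2 := by positivity
  have hx := sum_compl_sub_sum_compl_union (fun i => x i ^ 2) I J
  have hθ := sum_compl_sub_sum_compl_union (fun i => θ i ^ 2) I J
  have hsub : ∑ i ∈ (J ∪ I)ᶜ, θ i ^ 2 ≤ ∑ i ∈ Iᶜ, θ i ^ 2 :=
    sum_le_sum_of_subset_of_nonneg (compl_subset_compl.2 subset_union_right)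
      fun i _ _ => sq_nonneg _
  have hsplit : ∑ i ∈ I \ J, θ i ^ 2 ≤ 2 * ∑ i ∈ I \ J, x i ^ 2
      + 2 * (σ ^ 2 * ∑ i ∈ I \ J, ((x i - θ i) / σ) ^ 2) := by
    rw [mul_sum, mul_sum, mul_sum, ← sum_add_distrib]
    refine sum_le_sum fun i _ => ?_
    have : σ ^ 2 * ((x i - θ i) / σ) ^ 2 = (x i - θ i) ^ 2 := by
      rw [div_pow]; field_simp
    rw [this]
    nlinarith [sq_nonneg (2 * x i - θ i)]
  have hun : K * σ ^ 2 * ell n (J ∪ I).card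
      ≤ K * σ ^ 2 * (ell n J.card + ell n I.card) := by
    gcongr
    exact ell_card_union_le J I
  refine le_of_mul_le_mul_left ?_ hσ2
  linarith

theorem stmt_2 (Cξ Hξ αξ : ℝ) (hCξ : 0 < Cξ) (hHξ : 0 < Hξ) (hαξ : 0 < αξ) (K₁ δ : ℝ) (hK₁ : 0 < K₁) (hδ : 0 ≤ δ) (hδ1 : δ < 1) :
    ∃ A₁ α₁ α₁' : ℝ, 0 < A₁ ∧ 0 < α₁ ∧ 0 < α₁' ∧
      ∀ (n : ℕ) (σ : ℝ), 0 < σ →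
        ∀ P : (Fin n → ℝ) → Measure (Fin n → ℝ),
          (∀ θ, IsProbabilityMeasure (P θ)) →
          (∀ (θ : Fin n → ℝ) (I : Finset (Fin n)) (M : ℝ), 0 ≤ M →
            P θ {x | Cξ * I.card + M ≤ ∑ i ∈ I, ((x i - θ i) / σ) ^ 2}
              ≤ ENNReal.ofReal (Hξ * Real.exp (-αξ * M))) →
          ∀ Itil : (Fin n → ℝ) → Finset (Fin n),
            (∀ (x : Fin n → ℝ) (I : Finset (Fin n)),
              (∑ i ∈ (Itil x)ᶜ, x i ^ 2) + K₁ * σ ^ 2 * ell n (Itil x).card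
                ≤ (∑ i ∈ Iᶜ, x i ^ 2) + K₁ * σ ^ 2 * ell n I.card) →
            ∀ (θ : Fin n → ℝ) (Istar : Finset (Fin n)),
              (∀ I : Finset (Fin n),
                (∑ i ∈ Istarᶜ, θ i ^ 2) + A₁ * σ ^ 2 * ell n Istar.card
                  ≤ (∑ i ∈ Iᶜ, θ i ^ 2) + A₁ * σ ^ 2 * ell n I.card) →
              ∀ M : ℝ, 0 ≤ M →
                P θ {x | ell n (Itil x).card ≤ δ * ell n Istar.card - M}
                  ≤ ENNReal.ofReal (Hξ / (1 - Real.exp (-1)) *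
                      Real.exp (-α₁' * ell n Istar.card) * Real.exp (-α₁ * M)) := by
  have hδ' : 0 < 1 - δ := by linarith
  obtain ⟨A, hA⟩ : ∃ A, A = 2 * (2 / αξ + K₁ + Cξ) / (1 - δ) := ⟨_, rfl⟩
  have hApos : 0 < A := by rw [hA]; positivity
  have hAeq : A / 2 * (1 - δ) = 2 / αξ + K₁ + Cξ := by rw [hA]; field_simp
  refine ⟨A, αξ * (A / 2), 1, hApos, by positivity, one_pos, ?_⟩
  intro n σ hσ P _ hP Itil hItil θ Istar hIstar M hM
  set L := ell n Istar.card
  have hcardL : 2 * (Istar.card : ℝ) ≤ L :=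
    two_mul_le_ell (by simpa using card_le_univ Istar)
  have hL0 : 0 ≤ L := le_trans (by positivity) hcardL
  have hpiece : ∀ J : Finset (Fin n),
      P θ {x | Itil x = J ∧ ell n J.card ≤ δ * L - M}
        ≤ ENNReal.ofReal (Hξ * Real.exp (-1 * L) * Real.exp (-(αξ * (A / 2)) * M)
            * Real.exp (-ell n J.card)) := by
    intro J
    by_cases hJ : ell n J.card ≤ δ * L - M
    swap
    · simp [hJ]
    have hcard : ((Istar \ J).card : ℝ) ≤ Istar.card := by
      exact_mod_cast card_le_card sdiff_subset
    have hC : Cξ * ((Istar \ J).card : ℝ) ≤ Cξ * L := by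
      gcongr
      linarith [Nat.cast_nonneg (α := ℝ) Istar.card]
    have hδL : δ * L ≤ L := mul_le_of_le_one_left hL0 hδ1.le
    calc P θ {x | Itil x = J ∧ ell n J.card ≤ δ * L - M}
        ≤ P θ {x | Cξ * (Istar \ J).card + (2 / αξ * L + A / 2 * M)
            ≤ ∑ i ∈ Istar \ J, ((x i - θ i) / σ) ^ 2} := by
          refine measure_mono fun x hx => ?_
          have hnoise := le_sum_noise_sq (x := x) hσ hK₁.le
            (by simpa only [hx.1] using hItil x (J ∪ Istar)) (hIstar J)
          have hgap : A / 2 * ((1 - δ) * L + M) ≤ A / 2 * (L - ell n J.card) := by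
            gcongr
            linarith
          have hexpand : A / 2 * ((1 - δ) * L + M)
              = 2 / αξ * L + K₁ * L + Cξ * L + A / 2 * M := by
            rw [mul_add, ← mul_assoc, hAeq]; ring
          simp only [Set.mem_ofPred_eq]
          linarith
      _ ≤ ENNReal.ofReal (Hξ * Real.exp (-αξ * (2 / αξ * L + A / 2 * M))) :=
          hP θ _ _ (by positivity)
      _ ≤ _ := by
          refine ENNReal.ofReal_le_ofReal ?_
          rw [mul_assoc, mul_assoc, ← Real.exp_add, ← Real.exp_add]
          have hexponent : -αξ * (2 / αξ * L + A / 2 * M) = -2 * L - αξ * (A / 2) * M := by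
            field_simp; ring
          rw [hexponent]
          gcongr
          linarith
  calc P θ {x | ell n (Itil x).card ≤ δ * L - M}
      ≤ P θ (⋃ J ∈ (univ : Finset (Finset (Fin n))),
          {x | Itil x = J ∧ ell n J.card ≤ δ * L - M}) := by
        refine measure_mono fun x hx => ?_
        simpa using hx
    _ ≤ ∑ J : Finset (Fin n), P θ {x | Itil x = J ∧ ell n J.card ≤ δ * L - M} :=
        measure_biUnion_finset_le _ _
    _ ≤ ∑ J : Finset (Fin n), ENNReal.ofReal (Hξ * Real.exp (-1 * L)
          * Real.exp (-(αξ * (A / 2)) * M) * Real.exp (-ell n J.card)) :=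
        sum_le_sum fun J _ => hpiece J
    _ = ENNReal.ofReal (Hξ * Real.exp (-1 * L) * Real.exp (-(αξ * (A / 2)) * M)
          * ∑ J : Finset (Fin n), Real.exp (-ell n J.card)) := by
        rw [mul_sum, ENNReal.ofReal_sum_of_nonneg fun J _ => by positivity]
    _ ≤ ENNReal.ofReal (Hξ * Real.exp (-1 * L) * Real.exp (-(αξ * (A / 2)) * M)
          * (1 - Real.exp (-1))⁻¹) := by
        gcongr
        exact sum_exp_neg_ell_card_le n
    _ = _ := by
        congr 1
        rw [div_eq_mul_inv]
        ring
end

section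
/- Assume Condition (A1) and the standing assumptions. Then there exist constants H₁, α₂, H₂, α₃ > 0, depending only on the constants of (A1) and of the standing assumptions, such that for every integer k ≥ 1 and every θ ∈ ℝⁿ: (k-family-wise error rate) ℙ_θ( |Î(K)∖I^*| ≥ k ) ≤ (H₁/k)·(n − |I^*|)·(n/(|I^*| ∨ 1))^{−α₂}, and (k-family-wise non-discovery rate) ℙ_θ( |I_*∖Î(K)| ≥ k ) ≤ (H₂/k)·|I_*|·(n/(|I_*| ∨ 1))^{−α₃}. -/
open MeasureTheory Finset
open scoped Classical

/-- The selector `Î(K)`: empty if the preselector `Ĩ(K)` is empty, otherwise all coordinates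
with `X_i² ≥ K σ² log(q n / |Ĩ(K)|)`, where `q = e²`. -/
noncomputable def ihat {n : ℕ} (K σ : ℝ) (Itil : (Fin n → ℝ) → Finset (Fin n))
    (x : Fin n → ℝ) : Finset (Fin n) :=
  if Itil x = ∅ then ∅
  else Finset.univ.filter fun i =>
    K * σ ^ 2 * Real.log (Real.exp 2 * (n : ℝ) / (Itil x).card) ≤ (x i) ^ 2

lemma exp_neg_mul_log_le_rpow {r a b : ℝ} (hr : 1 ≤ r) (hb : 0 ≤ b) (hab : b ≤ a) :
    Real.exp (-a * Real.log (Real.exp 2 * r)) ≤ r ^ (-b) := by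
  have hr0 : 0 < r := by linarith
  rw [Real.rpow_def_of_pos hr0, Real.exp_le_exp,
    Real.log_mul (Real.exp_pos 2).ne' hr0.ne', Real.log_exp]
  nlinarith [Real.log_nonneg hr, mul_nonneg (sub_nonneg.2 hab) (Real.log_nonneg hr)]

lemma two_le_log_exp_two_mul {r : ℝ} (hr : 1 ≤ r) : 2 ≤ Real.log (Real.exp 2 * r) := by
  have hr0 : 0 < r := by linarith
  rw [Real.log_mul (Real.exp_pos 2).ne' hr0.ne', Real.log_exp]
  linarith [Real.log_nonneg hr]

lemma ell_nonneg {n k : ℕ} (hk : k ≤ n) : 0 ≤ ell n k := by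
  rcases Nat.eq_zero_or_pos k with rfl | hpos
  · simp [ell]
  · have hk0 : (0 : ℝ) < k := by exact_mod_cast hpos
    have hr : (1 : ℝ) ≤ n / k := by
      rw [le_div_iff₀ hk0]
      simpa using (show (k : ℝ) ≤ n by exact_mod_cast hk)
    have := two_le_log_exp_two_mul hr
    rw [← mul_div_assoc] at this
    exact mul_nonneg hk0.le (by linarith)

lemma ell_succ_sub_le {n k : ℕ} (hn : 0 < n) :
    ell n (k + 1) - ell n k ≤ Real.log (Real.exp 2 * n / (max k 1 : ℕ)) := by
  rcases Nat.eq_zero_or_pos k with rfl | hpos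
  · simp [ell]
  · have hk0 : (0 : ℝ) < k := by exact_mod_cast hpos
    have hn0 : (0 : ℝ) < n := by exact_mod_cast hn
    have hmono : Real.log (Real.exp 2 * n / ((k : ℝ) + 1)) ≤ Real.log (Real.exp 2 * n / k) := by
      apply Real.log_le_log (by positivity)
      gcongr
      linarith
    rw [max_eq_left hpos]
    simp only [ell, Nat.cast_add, Nat.cast_one]
    nlinarith

lemma half_log_le_ell_succ_sub {n k : ℕ} (hk : k + 1 ≤ n) :
    Real.log (Real.exp 2 * n / (k + 1 : ℕ)) / 2 ≤ ell n (k + 1) - ell n k := by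
  have hk1 : (0 : ℝ) < (k + 1 : ℕ) := by positivity
  have hr : (1 : ℝ) ≤ n / (k + 1 : ℕ) := by
    rw [le_div_iff₀ hk1, one_mul]
    exact_mod_cast hk
  have hy := two_le_log_exp_two_mul hr
  rw [← mul_div_assoc] at hy
  rcases Nat.eq_zero_or_pos k with rfl | hpos
  · simp [ell] at hy ⊢
    linarith
  · have hk0 : (0 : ℝ) < k := by exact_mod_cast hpos
    have hn0 : (0 : ℝ) < n := by exact_mod_cast (by omega : 0 < n)
    have hq : (0 : ℝ) < Real.exp 2 * n := by positivity
    have hlog : Real.log (Real.exp 2 * n / k)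
        = Real.log (Real.exp 2 * n / (k + 1 : ℕ)) + Real.log ((k + 1 : ℕ) / k) := by
      rw [← Real.log_mul (by positivity) (by positivity)]
      congr 1
      field_simp
    have hle : k * Real.log (((k + 1 : ℕ) : ℝ) / k) ≤ 1 := by
      have h := Real.log_le_sub_one_of_pos (show 0 < ((k + 1 : ℕ) : ℝ) / k by positivity)
      calc k * Real.log (((k + 1 : ℕ) : ℝ) / k) ≤ k * (((k + 1 : ℕ) : ℝ) / k - 1) := by gcongr
        _ = 1 := by push_cast; field_simp; ring
    have hell : ell n (k + 1) - ell n k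
        = Real.log (Real.exp 2 * n / (k + 1 : ℕ)) - k * Real.log (((k + 1 : ℕ) : ℝ) / k) := by
      simp only [ell]
      rw [hlog]
      push_cast
      ring
    rw [hell]
    linarith

section PenalizedMinimizer

variable {n : ℕ} {θ : Fin n → ℝ} {A σ : ℝ} {J : Finset (Fin n)}

/-- Coordinates outside a minimizer of the penalized criterion are small. -/
lemma sq_le_of_notMem_minimizer (hA : 0 < A)
    (hJ : ∀ I : Finset (Fin n), (∑ i ∈ Jᶜ, θ i ^ 2) + A * σ ^ 2 * ell n J.card
      ≤ (∑ i ∈ Iᶜ, θ i ^ 2) + A * σ ^ 2 * ell n I.card) {i : Fin n} (hi : i ∉ J) :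
    θ i ^ 2 ≤ A * σ ^ 2 * Real.log (Real.exp 2 * n / (max J.card 1 : ℕ)) := by
  have h := hJ (insert i J)
  rw [card_insert_of_notMem hi, compl_insert] at h
  have hsum := Finset.add_sum_erase Jᶜ (fun i => θ i ^ 2) (mem_compl.2 hi)
  have hell := mul_le_mul_of_nonneg_left (ell_succ_sub_le (n := n) (k := J.card) i.pos)
    (show 0 ≤ A * σ ^ 2 by positivity)
  linarith

/-- Coordinates inside a minimizer of the penalized criterion are large. -/
lemma le_sq_of_mem_minimizer (hA : 0 < A)
    (hJ : ∀ I : Finset (Fin n), (∑ i ∈ Jᶜ, θ i ^ 2) + A * σ ^ 2 * ell n J.card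
      ≤ (∑ i ∈ Iᶜ, θ i ^ 2) + A * σ ^ 2 * ell n I.card) {i : Fin n} (hi : i ∈ J) :
    A / 2 * σ ^ 2 * Real.log (Real.exp 2 * n / J.card) ≤ θ i ^ 2 := by
  have h := hJ (J.erase i)
  have hcard : J.card = (J.erase i).card + 1 := (card_erase_add_one hi).symm
  have hn : J.card ≤ n := by simpa using card_le_univ J
  rw [compl_erase, sum_insert (by simpa using hi)] at h
  have hell := mul_le_mul_of_nonneg_left
    (half_log_le_ell_succ_sub (n := n) (k := (J.erase i).card) (hcard ▸ hn))
    (show 0 ≤ A * σ ^ 2 by positivity)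
  rw [← hcard] at hell
  linarith

end PenalizedMinimizer

/-- Markov's inequality for a random finite set that, off an exceptional event, only contains
indices `i` whose event `E i` occurs. -/
lemma measure_le_card_le {Ω ι : Type*} [MeasurableSpace Ω] {μ : Measure Ω}
    {S : Ω → Finset ι} {J : Finset ι} {E : ι → Set Ω} {B : Set Ω} {b c : ℝ} {k : ℕ}
    (hk : 1 ≤ k) (hSJ : ∀ x, S x ⊆ J) (hE : ∀ i ∈ J, MeasurableSet (E i))
    (hSE : ∀ x ∉ B, ∀ i ∈ S x, x ∈ E i) (hb : 0 ≤ b) (hc : 0 ≤ c)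
    (hμB : μ B ≤ ENNReal.ofReal b) (hμE : ∀ i ∈ J, μ (E i) ≤ ENNReal.ofReal c) :
    μ {x | k ≤ (S x).card} ≤ ENNReal.ofReal ((b + c) * (J.card / k)) := by
  have hk0 : (0 : ℝ) < k := by exact_mod_cast hk
  by_cases hkJ : k ≤ J.card
  swap
  · have hempty : {x | k ≤ (S x).card} = ∅ := by
      ext x
      have := card_le_card (hSJ x)
      simp only [Set.mem_ofPred_eq, Set.mem_empty_iff_false, iff_false]
      omega
    simp [hempty]
  have hratio : (1 : ℝ) ≤ J.card / k := by
    rw [le_div_iff₀ hk0, one_mul]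
    exact_mod_cast hkJ
  let f : Ω → ENNReal := fun x => ∑ i ∈ J, (E i).indicator 1 x
  have hf : Measurable f :=
    Finset.measurable_sum J fun i hi => measurable_one.indicator (hE i hi)
  have hsub : {x | k ≤ (S x).card} ⊆ B ∪ {x | (k : ENNReal) ≤ f x} := by
    intro x hx
    by_cases hxB : x ∈ B
    · exact Or.inl hxB
    · right
      calc (k : ENNReal) ≤ (S x).card := by exact_mod_cast hx
        _ = ∑ i ∈ S x, (E i).indicator 1 x := by
          rw [sum_congr rfl fun i hi => Set.indicator_of_mem (hSE x hxB i hi) 1]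
          simp
        _ ≤ f x := sum_le_sum_of_subset (hSJ x)
  have hint : ∫⁻ x, f x ∂μ ≤ ENNReal.ofReal (J.card * c) := by
    rw [lintegral_finsetSum J fun i hi => measurable_one.indicator (hE i hi)]
    calc ∑ i ∈ J, ∫⁻ x, (E i).indicator 1 x ∂μ = ∑ i ∈ J, μ (E i) :=
          sum_congr rfl fun i hi => lintegral_indicator_one (hE i hi)
      _ ≤ ∑ _i ∈ J, ENNReal.ofReal c := sum_le_sum hμE
      _ = ENNReal.ofReal (J.card * c) := by
        rw [sum_const, nsmul_eq_mul, ENNReal.ofReal_mul (by positivity), ENNReal.ofReal_natCast]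
  have hmarkov : μ {x | (k : ENNReal) ≤ f x} ≤ ENNReal.ofReal (J.card * c / k) := by
    calc μ {x | (k : ENNReal) ≤ f x} ≤ (∫⁻ x, f x ∂μ) / k :=
          meas_ge_le_lintegral_div hf.aemeasurable
            (by exact_mod_cast (by omega : k ≠ 0)) (ENNReal.natCast_ne_top k)
      _ ≤ ENNReal.ofReal (J.card * c) / k := by gcongr
      _ = ENNReal.ofReal (J.card * c / k) := by
        rw [ENNReal.ofReal_div_of_pos hk0, ENNReal.ofReal_natCast]
  calc μ {x | k ≤ (S x).card} ≤ μ B + μ {x | (k : ENNReal) ≤ f x} :=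
        (measure_mono hsub).trans (measure_union_le _ _)
    _ ≤ ENNReal.ofReal b + ENNReal.ofReal (J.card * c / k) := add_le_add hμB hmarkov
    _ = ENNReal.ofReal (b + J.card * c / k) := (ENNReal.ofReal_add hb (by positivity)).symm
    _ ≤ ENNReal.ofReal ((b + c) * (J.card / k)) := by
      apply ENNReal.ofReal_le_ofReal
      have := mul_le_mul_of_nonneg_left hratio hb
      calc b + J.card * c / k ≤ b * (J.card / k) + J.card * c / k := by linarith
        _ = (b + c) * (J.card / k) := by ring

/-- The single-coordinate tail bound, extended to levels of arbitrary sign. -/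
lemma measure_noise_sq_le {n : ℕ} {μ : Measure (Fin n → ℝ)} [IsProbabilityMeasure μ]
    {θ : Fin n → ℝ} {σ C H α : ℝ} (hH : 0 < H) (hα : 0 < α)
    (hμ : ∀ (I : Finset (Fin n)) (M : ℝ), 0 ≤ M →
      μ {x | C * I.card + M ≤ ∑ i ∈ I, ((x i - θ i) / σ) ^ 2}
        ≤ ENNReal.ofReal (H * Real.exp (-α * M)))
    (i : Fin n) (M : ℝ) :
    μ {x | C + M ≤ ((x i - θ i) / σ) ^ 2} ≤ ENNReal.ofReal ((1 + H) * Real.exp (-α * M)) := by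
  rcases le_or_gt 0 M with hM | hM
  · have h := hμ {i} M hM
    simp only [card_singleton, Nat.cast_one, mul_one, sum_singleton] at h
    refine h.trans (ENNReal.ofReal_le_ofReal ?_)
    gcongr
    linarith
  · refine prob_le_one.trans ?_
    rw [ENNReal.one_le_ofReal]
    have h1 : 1 ≤ Real.exp (-α * M) := Real.one_le_exp (by nlinarith)
    nlinarith

lemma measurableSet_noise_sq {n : ℕ} (θ : Fin n → ℝ) (σ a : ℝ) (i : Fin n) :
    MeasurableSet {x : Fin n → ℝ | a ≤ ((x i - θ i) / σ) ^ 2} :=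
  measurableSet_le measurable_const (by fun_prop)

lemma log_exp_two_mul_div_ge {N m t y M ε : ℝ} (hN : 0 < N) (hm : 1 ≤ m) (hM : 0 < M)
    (hε : 0 < ε) (hy : y = Real.log (Real.exp 2 * N / m)) (hy1 : 1 ≤ y) (ht : 0 < t)
    (htle : t ≤ M * m + y) :
    (1 - ε) * y - (Real.log (M + 1) - Real.log ε) ≤ Real.log (Real.exp 2 * N / t) := by
  have hm0 : 0 < m := by linarith
  have hy0 : 0 < y := by linarith
  have htle' : t ≤ (M + 1) * m * y := by
    nlinarith [mul_le_mul_of_nonneg_left hy1 (mul_pos hM hm0).le,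
      mul_le_mul_of_nonneg_right hm hy0.le]
  have hlogt : Real.log t ≤ Real.log (M + 1) + Real.log m + Real.log y := by
    rw [← Real.log_mul (by positivity) (by positivity),
      ← Real.log_mul (by positivity) (by positivity)]
    exact Real.log_le_log ht htle'
  have hlogy : Real.log ε + Real.log y ≤ ε * y := by
    rw [← Real.log_mul hε.ne' hy0.ne']
    linarith [Real.log_le_sub_one_of_pos (mul_pos hε hy0)]
  rw [Real.log_div (by positivity) (by positivity)] at hy ⊢
  linarith

lemma noise_sq_ge_of_selected {x θ σ K A L y : ℝ} (hσ : 0 < σ)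
    (hθ : θ ^ 2 ≤ A * σ ^ 2 * y) (hx : K * σ ^ 2 * L ≤ x ^ 2) :
    K / 2 * L - A * y ≤ ((x - θ) / σ) ^ 2 := by
  rw [div_pow, le_div_iff₀ (by positivity)]
  nlinarith [sq_nonneg (x - 2 * θ)]

lemma noise_sq_ge_of_rejected {x θ σ K A L y : ℝ} (hσ : 0 < σ)
    (hθ : A / 2 * σ ^ 2 * y ≤ θ ^ 2) (hx : x ^ 2 ≤ K * σ ^ 2 * L) :
    A / 6 * y - K / 2 * L ≤ ((x - θ) / σ) ^ 2 := by
  rw [div_pow, le_div_iff₀ (by positivity)]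
  nlinarith [sq_nonneg (3 * x - 2 * θ)]

lemma one_le_div_of_pos_of_le {n m : ℕ} (hm : 0 < m) (hmn : m ≤ n) : (1 : ℝ) ≤ n / m := by
  rw [le_div_iff₀ (by exact_mod_cast hm), one_mul]
  exact_mod_cast hmn

set_option maxHeartbeats 1000000 in
theorem stmt_7 (Cξ Hξ αξ : ℝ) (hCξ : 0 < Cξ) (hHξ : 0 < Hξ) (hαξ : 0 < αξ)
    (K A₀ A₁ α₀ α₁' M₁ δ : ℝ)
    (hK : 0 < K) (hA₀ : 0 < A₀) (hA₁ : 0 < A₁) (hα₀ : 0 < α₀) (hα₁' : 0 < α₁')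
    (hM₁ : 1 < M₁) (hδ : 0 < δ) (hδ1 : δ < 1) (hA01 : A₀ ≤ A₁)
    (hKC : A₀ + Cξ < K / 2)
    (hA1big : K / 2 + αξ⁻¹ * ((Cξ * αξ + 2) / 2 + 1) < A₁ / 6) :
    ∃ H₁ α₂ H₂ α₃ : ℝ, 0 < H₁ ∧ 0 < α₂ ∧ 0 < H₂ ∧ 0 < α₃ ∧
      ∀ (n : ℕ) (σ : ℝ), 0 < σ →
        ∀ P : (Fin n → ℝ) → Measure (Fin n → ℝ),
          (∀ θ, IsProbabilityMeasure (P θ)) →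
          (∀ (θ : Fin n → ℝ) (I : Finset (Fin n)) (M : ℝ), 0 ≤ M →
              P θ {x | Cξ * I.card + M ≤ ∑ i ∈ I, ((x i - θ i) / σ) ^ 2}
                ≤ ENNReal.ofReal (Hξ * Real.exp (-αξ * M))) →
          ∀ Itil : (Fin n → ℝ) → Finset (Fin n),
            (∀ (x : Fin n → ℝ) (I : Finset (Fin n)),
                (∑ i ∈ (Itil x)ᶜ, x i ^ 2) + K * σ ^ 2 * ell n (Itil x).card
                  ≤ (∑ i ∈ Iᶜ, x i ^ 2) + K * σ ^ 2 * ell n I.card) →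
            ∀ Istar : ℝ → (Fin n → ℝ) → Finset (Fin n),
              (∀ (A : ℝ) (θ : Fin n → ℝ), 0 < A → ∀ I : Finset (Fin n),
                  (∑ i ∈ (Istar A θ)ᶜ, θ i ^ 2) + A * σ ^ 2 * ell n (Istar A θ).card
                    ≤ (∑ i ∈ Iᶜ, θ i ^ 2) + A * σ ^ 2 * ell n I.card) →
              (∀ (θ : Fin n → ℝ) (M : ℝ), 0 ≤ M →
                  P θ {x | M₁ * (Istar A₀ θ).card + M ≤ ((Itil x).card : ℝ)}
                    ≤ ENNReal.ofReal (Hξ / (1 - Real.exp (-1)) *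
                        Real.exp (-α₀ * ell n (Istar A₀ θ).card - α₀ * M / 2))) →
              (∀ θ : Fin n → ℝ,
                  P θ {x | ((Itil x).card : ℝ) ≤ δ * (Istar A₁ θ).card}
                    ≤ ENNReal.ofReal (Hξ / (1 - Real.exp (-1)) *
                        Real.exp (-α₁' * ell n (Istar A₁ θ).card))) →
              ∀ (k : ℕ), 1 ≤ k → ∀ θ : Fin n → ℝ,
                P θ {x | k ≤ (ihat K σ Itil x \ Istar A₀ θ).card}
                    ≤ ENNReal.ofReal ((H₁ / k) * ((n : ℝ) - (Istar A₀ θ).card) *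
                        ((n : ℝ) / (↑(max (Istar A₀ θ).card 1))) ^ (-α₂)) ∧
                  P θ {x | k ≤ (Istar A₁ θ \ ihat K σ Itil x).card}
                    ≤ ENNReal.ofReal ((H₂ / k) * ((Istar A₁ θ).card : ℝ) *
                        ((n : ℝ) / (↑(max (Istar A₁ θ).card 1))) ^ (-α₃)) := by
  set H₀ : ℝ := Hξ / (1 - Real.exp (-1)) with hH₀
  have hH₀pos : 0 < H₀ := by
    have : Real.exp (-1) < 1 := by simp
    exact div_pos hHξ (by linarith)
  -- the slack in `A₀ + Cξ < K / 2`, half of which absorbs the logarithm of the size bound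
  let c : ℝ := (K / 2 - A₀ - Cξ) / 2
  have hc : 0 < c := by simp only [c]; linarith
  let ε : ℝ := 2 * c / K
  have hε : 0 < ε := by positivity
  have hKε : K / 2 * ε = c := by simp only [ε]; field_simp
  let D : ℝ := K / 2 * (Real.log (M₁ + 1) - Real.log ε)
  let D' : ℝ := K / 2 * (-Real.log δ)
  refine ⟨H₀ + (1 + Hξ) * Real.exp (αξ * D), min (α₀ / 2) (αξ * c),
    H₀ + (1 + Hξ) * Real.exp (αξ * D'), min α₁' 2, by positivity, by positivity,
    by positivity, by positivity, ?_⟩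
  intro n σ hσ P hP hnoise Itil _ Istar hIstar hover hunder k hk θ
  have := hP θ
  constructor
  · set J := Istar A₀ θ with hJ
    set m : ℕ := max J.card 1 with hm
    have hcardn : J.card ≤ n := by simpa using card_le_univ J
    have hcompl : ((Jᶜ.card : ℕ) : ℝ) = n - J.card := by
      rw [card_compl, Fintype.card_fin, Nat.cast_sub hcardn]
    rcases Nat.eq_zero_or_pos n with rfl | hn
    · have hempty : {x | k ≤ (ihat K σ Itil x \ J).card} = ∅ := by
        ext x
        have : (ihat K σ Itil x \ J).card ≤ 0 := by
          simp
        simp only [Set.mem_ofPred_eq, Set.mem_empty_iff_false, iff_false]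
        omega
      simp [hempty]
    have hm0 : 0 < m := by omega
    have hr : (1 : ℝ) ≤ n / m := one_le_div_of_pos_of_le hm0 (by omega)
    set y : ℝ := Real.log (Real.exp 2 * (n / m)) with hy
    have hy2 : 2 ≤ y := two_le_log_exp_two_mul hr
    have hy' : y = Real.log (Real.exp 2 * n / m) := by rw [hy, mul_div_assoc]
    have hbad := hover θ y (by linarith)
    have hmain := measure_le_card_le (μ := P θ) (S := fun x => ihat K σ Itil x \ J) (J := Jᶜ)
      (E := fun i => {x | Cξ + (c * y - D) ≤ ((x i - θ i) / σ) ^ 2}) hk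
      (fun x i hi => by simpa using (mem_sdiff.1 hi).2)
      (fun i _ => measurableSet_noise_sq θ σ _ i) (fun x hx i hi => ?_)
      (by positivity) (by positivity) hbad
      (fun i _ => measure_noise_sq_le hHξ hαξ (hnoise θ) i _)
    · refine hmain.trans (ENNReal.ofReal_le_ofReal ?_)
      have hb : Real.exp (-α₀ * ell n J.card - α₀ * y / 2)
          ≤ ((n : ℝ) / m) ^ (-min (α₀ / 2) (αξ * c)) := by
        refine le_trans ?_ (exp_neg_mul_log_le_rpow hr (by positivity) (min_le_left _ _))
        rw [Real.exp_le_exp, ← hy]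
        nlinarith [mul_nonneg hα₀.le (ell_nonneg hcardn)]
      have he : Real.exp (-αξ * (c * y - D))
          ≤ Real.exp (αξ * D) * ((n : ℝ) / m) ^ (-min (α₀ / 2) (αξ * c)) := by
        rw [show -αξ * (c * y - D) = αξ * D + -(αξ * c) * y by ring, Real.exp_add]
        gcongr
        exact exp_neg_mul_log_le_rpow hr (by positivity) (min_le_right _ _)
      rw [hcompl]
      have hnJ : (0 : ℝ) ≤ n - J.card := by rw [← hcompl]; positivity
      calc _ ≤ (H₀ * ((n : ℝ) / m) ^ (-min (α₀ / 2) (αξ * c)) + (1 + Hξ) *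
            (Real.exp (αξ * D) * ((n : ℝ) / m) ^ (-min (α₀ / 2) (αξ * c)))) *
              ((n - J.card) / k) := by gcongr
        _ = _ := by ring
    · obtain ⟨hi, hiJ⟩ := mem_sdiff.1 hi
      have hθ := sq_le_of_notMem_minimizer hA₀ (hIstar A₀ θ hA₀) hiJ
      rw [← hJ, ← hm, ← hy'] at hθ
      simp only [ihat] at hi
      split_ifs at hi with hI
      · simp at hi
      have hxi := (mem_filter.1 hi).2
      have hx' : ((Itil x).card : ℝ) < M₁ * J.card + y := not_le.1 hx
      have hJm : (J.card : ℝ) ≤ m := by exact_mod_cast le_max_left _ _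
      have hL := log_exp_two_mul_div_ge (t := (Itil x).card) (M := M₁) (m := m) (N := n)
        (by exact_mod_cast hn) (by exact_mod_cast hm0) (by linarith) hε hy' (by linarith)
        (by exact_mod_cast card_pos.2 (nonempty_iff_ne_empty.2 hI)) (by nlinarith)
      refine le_trans ?_ (noise_sq_ge_of_selected hσ hθ hxi)
      have hL' := mul_le_mul_of_nonneg_left hL (show 0 ≤ K / 2 by positivity)
      have hexp : K / 2 * ((1 - ε) * y - (Real.log (M₁ + 1) - Real.log ε))
          = K / 2 * y - c * y - D := by rw [← hKε]; simp only [D]; ring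
      have hcy : K / 2 * y - A₀ * y = 2 * c * y + Cξ * y := by simp only [c]; ring
      nlinarith
  · set J := Istar A₁ θ with hJ
    have hcardn : J.card ≤ n := by simpa using card_le_univ J
    rcases J.eq_empty_or_nonempty with hJe | hJne
    · have hempty : {x | k ≤ (J \ ihat K σ Itil x).card} = ∅ := by
        ext x
        simp only [hJe, empty_sdiff, card_empty, Set.mem_ofPred_eq, Set.mem_empty_iff_false,
          iff_false]
        omega
      simp [hempty]
    have hJ0 : 0 < J.card := card_pos.2 hJne
    rw [max_eq_left hJ0]
    have hJ1 : (1 : ℝ) ≤ J.card := by exact_mod_cast hJ0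
    have hn0 : (0 : ℝ) < n := by exact_mod_cast (by omega : 0 < n)
    have hr : (1 : ℝ) ≤ n / J.card := one_le_div_of_pos_of_le hJ0 hcardn
    set y : ℝ := Real.log (Real.exp 2 * (n / J.card)) with hy
    have hy2 : 2 ≤ y := two_le_log_exp_two_mul hr
    have hy' : y = Real.log (Real.exp 2 * n / J.card) := by rw [hy, mul_div_assoc]
    have hmain := measure_le_card_le (μ := P θ) (S := fun x => J \ ihat K σ Itil x) (J := J)
      (E := fun i => {x | Cξ + (αξ⁻¹ * 2 * y - D') ≤ ((x i - θ i) / σ) ^ 2}) hk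
      (fun x => sdiff_subset)
      (fun i _ => measurableSet_noise_sq θ σ _ i) (fun x hx i hi => ?_)
      (by positivity) (by positivity) (hunder θ)
      (fun i _ => measure_noise_sq_le hHξ hαξ (hnoise θ) i _)
    · refine hmain.trans (ENNReal.ofReal_le_ofReal ?_)
      have hb : Real.exp (-α₁' * ell n J.card) ≤ ((n : ℝ) / J.card) ^ (-min α₁' 2) := by
        refine le_trans ?_ (exp_neg_mul_log_le_rpow hr (by positivity) (min_le_left _ _))
        rw [Real.exp_le_exp, ← hy]
        have hell : y ≤ ell n J.card := by
          simp only [ell]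
          rw [← hy']
          nlinarith
        nlinarith
      have he : Real.exp (-αξ * (αξ⁻¹ * 2 * y - D'))
          ≤ Real.exp (αξ * D') * ((n : ℝ) / J.card) ^ (-min α₁' 2) := by
        rw [show -αξ * (αξ⁻¹ * 2 * y - D') = αξ * D' + -2 * y by field_simp; ring,
          Real.exp_add]
        gcongr
        exact exp_neg_mul_log_le_rpow hr (by positivity) (min_le_right _ _)
      calc _ ≤ (H₀ * ((n : ℝ) / J.card) ^ (-min α₁' 2) + (1 + Hξ) *
            (Real.exp (αξ * D') * ((n : ℝ) / J.card) ^ (-min α₁' 2))) *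
              (J.card / k) := by gcongr
        _ = _ := by ring
    · obtain ⟨hiJ, hi⟩ := mem_sdiff.1 hi
      have hθ := le_sq_of_mem_minimizer hA₁ (hIstar A₁ θ hA₁) hiJ
      rw [← hJ, ← hy'] at hθ
      have hx' : δ * J.card < ((Itil x).card : ℝ) := not_le.1 hx
      have hIpos : (0 : ℝ) < (Itil x).card := lt_trans (by positivity) hx'
      have hI : Itil x ≠ ∅ := card_pos.1 (by exact_mod_cast hIpos) |>.ne_empty
      simp only [ihat, if_neg hI, mem_filter, mem_univ, true_and, not_le] at hi
      have hL : Real.log (Real.exp 2 * n / (Itil x).card) ≤ y - Real.log δ := by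
        rw [hy', ← Real.log_div (by positivity) hδ.ne', div_div]
        apply Real.log_le_log (by positivity)
        rw [mul_comm _ δ]
        gcongr
      refine le_trans ?_ (noise_sq_ge_of_rejected hσ hθ hi.le)
      have hL' := mul_le_mul_of_nonneg_left hL (show 0 ≤ K / 2 by positivity)
      have hD' : K / 2 * (y - Real.log δ) = K / 2 * y + D' := by simp only [D']; ring
      have hMξ : αξ⁻¹ * ((Cξ * αξ + 2) / 2 + 1) = Cξ / 2 + αξ⁻¹ * 2 := by field_simp; ring
      rw [hMξ] at hA1big
      nlinarith
end
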